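/- arXiv:2309.11788 — 3 statements merged into one kernel-verified Lean document; each statement's English description precedes it below -/
import Mathlib

section
/- For every m ≥ 0, the MVP fibre of the complete bipartite permutation τ_{m,2} = 34⋯(m+2)12 ∈ S_{m+2} has size |Fib_{m+2}(τ_{m,2})| = m + 1 + ⌊(m+1)²/2⌋. -/
/- Common definitions: the classical and MVP parking processes, parking
functions, inversion graphs and 1-subgraphs, Motzkin paths, and sandpile
configurations on complete graphs. Spots, cars and vertices are 0-indexed
(element `i : Fin n` corresponds to the 1-indexed `i+1` of the paper). -/

namespace MVPPaper

open Finset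

variable {n : ℕ}

/-- The first unoccupied spot `k ≥ s` in the occupancy `occ`, if any exists.
`occ k = some i` means spot `k` is occupied by car `i`. -/
def firstFree (occ : Fin n → Option (Fin n)) (s : Fin n) : Option (Fin n) :=
  (List.finRange n).find? fun k => decide (s ≤ k) && (occ k).isNone

/-- One step of the classical parking process: car `i`, preferring spot `s`,
parks in the first free spot `k ≥ s` (failure if none exists). -/
def classicalStep (occ : Fin n → Option (Fin n)) (i s : Fin n) :
    Option (Fin n → Option (Fin n)) :=
  (firstFree occ s).map fun k => Function.update occ k (some i)

/-- One step of the MVP parking process: car `i` parks in its preferred spot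
`s`; if `s` was occupied by an earlier car `j`, then `j` is bumped out and
drives on to the first free spot `k ≥ s` (failure if none exists). -/
def mvpStep (occ : Fin n → Option (Fin n)) (i s : Fin n) :
    Option (Fin n → Option (Fin n)) :=
  match occ s with
  | none => some (Function.update occ s (some i))
  | some j =>
      (firstFree (Function.update occ s (some i)) s).map fun k =>
        Function.update (Function.update occ s (some i)) k (some j)

/-- Run a parking process: cars `0, 1, …, n-1` enter in order, with car `i`
preferring spot `p i`. Returns the final occupancy, or `none` on failure. -/
def runProcess
    (step : (Fin n → Option (Fin n)) → Fin n → Fin n → Option (Fin n → Option (Fin n)))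
    (p : Fin n → Fin n) : Option (Fin n → Option (Fin n)) :=
  List.foldlM (fun occ i => step occ i (p i)) (fun _ => none) (List.finRange n)

def mvpRun (p : Fin n → Fin n) : Option (Fin n → Option (Fin n)) :=
  runProcess mvpStep p

def classicalRun (p : Fin n → Fin n) : Option (Fin n → Option (Fin n)) :=
  runProcess classicalStep p

/-- All cars park successfully under the MVP process. -/
def IsMVPParking (p : Fin n → Fin n) : Prop := (mvpRun p).isSome

/-- All cars park successfully under the classical process. -/
def IsClassicalParking (p : Fin n → Fin n) : Prop := (classicalRun p).isSome

/-- `MVPOutcome p π` means that the MVP parking process for `p` succeeds, and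
car `π i` finally occupies spot `i` for all `i`; that is, `O_MVP(p) = π`. -/
def MVPOutcome (p : Fin n → Fin n) (π : Equiv.Perm (Fin n)) : Prop :=
  ∃ occ, mvpRun p = some occ ∧ ∀ i, occ i = some (π i)

/-- `p` is a parking function: for every `k`, at least `k+1` cars prefer a spot
`≤ k` (the classical counting characterisation, 0-indexed). -/
def IsParkingFunction (p : Fin n → Fin n) : Prop :=
  ∀ k : Fin n, (k : ℕ) + 1 ≤ (univ.filter fun i => p i ≤ k).card

/-- The fibre of the MVP outcome map over `π`: parking functions with MVP
outcome `π`. -/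
def FibMVP (π : Equiv.Perm (Fin n)) : Set (Fin n → Fin n) :=
  {p | IsParkingFunction p ∧ MVPOutcome p π}

/-- The set of inversions of `π` (where `π i` is the car occupying spot `i`):
pairs `(j, i)` with `j < i` and `π j > π i`. These are the edges of the
inversion graph `G_π`. -/
def invFinset (π : Equiv.Perm (Fin n)) : Finset (Fin n × Fin n) :=
  univ.filter fun e => e.1 < e.2 ∧ π e.2 < π e.1

/-- The left-inversions of `π` at `i`. -/
def lInv (π : Equiv.Perm (Fin n)) (i : Fin n) : Finset (Fin n) :=
  univ.filter fun j => j < i ∧ π i < π j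

/-- A 1-subgraph of the inversion graph of `π`: a set of inversions with at
most one incident left-arc at each vertex. -/
def IsOneSubgraph (π : Equiv.Perm (Fin n)) (S : Finset (Fin n × Fin n)) : Prop :=
  S ⊆ invFinset π ∧ ∀ i j j' : Fin n, (j, i) ∈ S → (j', i) ∈ S → j = j'

/-- The map `Ψ_{Sub→PF}`: the parking preference `p` where `p (π i) = j` if
`(j, i) ∈ S` (for the unique such `j`), and `p (π i) = i` otherwise. -/
noncomputable def subToPF (π : Equiv.Perm (Fin n)) (S : Finset (Fin n × Fin n)) :
    Fin n → Fin n := fun c =>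
  if h : ∃ j, (j, π.symm c) ∈ S then h.choose else π.symm c

/-- The map `Ψ_{PF→Sub}`: the set of inversions `(j, i)` of `π` with
`p (π i) = j`. -/
def pfToSub (π : Equiv.Perm (Fin n)) (p : Fin n → Fin n) : Finset (Fin n × Fin n) :=
  (invFinset π).filter fun e => p (π e.2) = e.1

/-- A 1-subgraph `S` is valid if the MVP outcome of `Ψ_{Sub→PF}(S)` is `π`. -/
def IsValid (π : Equiv.Perm (Fin n)) (S : Finset (Fin n × Fin n)) : Prop :=
  MVPOutcome (subToPF π S) π

/-- `π` contains the pattern `321`. -/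
def Contains321 (π : Equiv.Perm (Fin n)) : Prop :=
  ∃ i j k : Fin n, i < j ∧ j < k ∧ π k < π j ∧ π j < π i

/-- `π` contains the pattern `3412`. -/
def Contains3412 (π : Equiv.Perm (Fin n)) : Prop :=
  ∃ i j k l : Fin n, i < j ∧ j < k ∧ k < l ∧ π k < π l ∧ π l < π i ∧ π i < π j

/-- `S` is `P⃗₂`-free: there is no triple `i < j < k` with `(i,j) ∈ S` and
`(j,k) ∈ S`. -/
def P2Free (S : Finset (Fin n × Fin n)) : Prop :=
  ¬∃ i j k : Fin n, i < j ∧ j < k ∧ (i, j) ∈ S ∧ (j, k) ∈ S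

/-- `S` is horizontally separated (HS): any two distinct edges `(j,i)` and
`(j',i')` of `S` satisfy `i < j'` or `i' < j`. -/
def IsHS (S : Finset (Fin n × Fin n)) : Prop :=
  ∀ e ∈ S, ∀ e' ∈ S, e ≠ e' → e.2 < e'.1 ∨ e'.2 < e.1

/-- Steps of a Motzkin path: up, horizontal, down. -/
inductive MStep : Type
  | U : MStep
  | H : MStep
  | D : MStep
  deriving DecidableEq

/-- The height change of a step. -/
def stepVal : MStep → ℤ
  | MStep.U => 1
  | MStep.H => 0
  | MStep.D => -1

/-- The number of cars preferring spot `j` in `p`. -/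
def prefCount (p : Fin n → Fin n) (j : Fin n) : ℕ :=
  (univ.filter fun i => p i = j).card

/-- The lattice path `Φ(p)`: step `j` is `U`, `H` or `D` according to whether
spot `j` is preferred by at least two, exactly one, or no cars. -/
def Phi (p : Fin n → Fin n) : Fin n → MStep := fun j =>
  if 2 ≤ prefCount p j then MStep.U
  else if prefCount p j = 1 then MStep.H
  else MStep.D

/-- An `n`-step lattice path is a Motzkin path: it ends at height `0` and no
prefix goes below height `0`. -/
def IsMotzkinPath (φ : Fin n → MStep) : Prop :=
  (∑ j : Fin n, stepVal (φ j)) = 0 ∧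
  ∀ k : Fin n, 0 ≤ ∑ j ∈ univ.filter (fun j : Fin n => j ≤ k), stepVal (φ j)

/-- The decreasing permutation `dec_n = n(n-1)⋯1`: spot `i` gets car `n-1-i`
(0-indexed). -/
def decPerm (n : ℕ) : Equiv.Perm (Fin n) :=
  ⟨Fin.rev, Fin.rev, Fin.rev_rev, Fin.rev_rev⟩

/-- A non-crossing matching arc diagram on `{0, …, n-1}`: arcs go left to
right, each vertex is incident to at most one arc, and no two arcs cross. -/
def IsNonCrossMatching (S : Finset (Fin n × Fin n)) : Prop :=
  (∀ e ∈ S, e.1 < e.2) ∧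
  (∀ e ∈ S, ∀ e' ∈ S, e ≠ e' →
    e.1 ≠ e'.1 ∧ e.1 ≠ e'.2 ∧ e.2 ≠ e'.1 ∧ e.2 ≠ e'.2) ∧
  ¬∃ i j k l : Fin n, i < j ∧ j < k ∧ k < l ∧ (i, k) ∈ S ∧ (j, l) ∈ S

/-- A stable configuration `c` (grain counts, each `< n`) on the complete graph
`K_n` is recurrent; by Dhar's burning criterion this amounts on `K_n` to the
existence of an ordering `v` of the vertices with `c (v k) ≥ n - (k+1)` for
every `k` (0-indexed). -/
def IsRecurrentK (c : Fin n → ℕ) : Prop :=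
  (∀ i, c i < n) ∧ ∃ v : Equiv.Perm (Fin n), ∀ k : Fin n, n ≤ c (v k) + (k : ℕ) + 1

/-!
The car that ends up in a spot is never earlier than a car preferring that spot, and cars only ever
move to the right. For `τ_{m,2}` these two facts leave no choice for the cars `c ≥ 2`, which must
prefer spot `c - 2`, and car `0` must prefer a spot `≤ m`. The cars `2, …, m + 1` then sweep the
street from left to right, pushing cars `0` and `1` into the last two spots, and the outcome is
`τ_{m,2}` exactly when `0` ends up to the left of `1`. Once the two cars are adjacent each further
bump swaps their order, so this is a parity condition on the preferences `(a, b)` of cars `0` and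
`1`. Passing from `m` to `m + 2` keeps all admissible pairs and adds `2 m + 6` new ones.
-/

section Occupancy

variable {p : Fin n → Fin n} {occ occ' : Fin n → Option (Fin n)} {c i j k s : Fin n} {t : ℕ}

theorem firstFree_eq_some_iff :
    firstFree occ s = some k ↔ s ≤ k ∧ occ k = none ∧ ∀ l, s ≤ l → l < k → occ l ≠ none := by
  rw [firstFree, ← Fin.find?_eq_find?_finRange, Fin.find?_eq_some_iff]
  grind [Option.isNone_iff_eq_none]

theorem mvpStep_of_vacant (hs : occ s = none) :
    mvpStep occ i s = some (Function.update occ s (some i)) := by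
  simp [mvpStep, hs]

theorem mvpStep_of_occupied (hs : occ s = some j) (hsk : s < k) (hk : occ k = none)
    (hlt : ∀ l, s < l → l < k → occ l ≠ none) :
    mvpStep occ i s = some (Function.update (Function.update occ s (some i)) k (some j)) := by
  have hfree : firstFree (Function.update occ s (some i)) s = some k := by
    rw [firstFree_eq_some_iff]
    grind
  simp [mvpStep, hs, hfree]

theorem mvpStep_eq_some (h : mvpStep occ i s = some occ') :
    (occ s = none ∧ occ' = Function.update occ s (some i)) ∨
      ∃ j k, occ s = some j ∧ s < k ∧ occ k = none ∧
        occ' = Function.update (Function.update occ s (some i)) k (some j) := by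
  rcases hs : occ s with _ | j
  · simp_all [mvpStep]
  · simp only [mvpStep, hs, Option.map_eq_some_iff, firstFree_eq_some_iff] at h
    grind

theorem mvpStep_apply_pref (h : mvpStep occ i s = some occ') : occ' s = some i := by
  obtain ⟨-, rfl⟩ | ⟨j', q, -, hsq, -, rfl⟩ := mvpStep_eq_some h
  · simp
  · simp [hsq.ne]

theorem le_of_mvpStep_apply_eq_some (hcars : ∀ k j, occ k = some j → j < i)
    (h : mvpStep occ i s = some occ') (hk : occ' k = some j) : j ≤ i := by
  obtain ⟨-, rfl⟩ | ⟨j', q, hs, -, -, rfl⟩ := mvpStep_eq_some h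
  · grind
  · have hj' : j' < i := hcars s j' hs
    grind

theorem exists_ge_mvpStep_apply_eq_some (hcars : ∀ k j, occ k = some j → j < i)
    (h : mvpStep occ i s = some occ') (hk : occ k = some j) : ∃ j' ≥ j, occ' k = some j' := by
  obtain ⟨hs, rfl⟩ | ⟨j', q, hs, -, hq, rfl⟩ := mvpStep_eq_some h
  · exact ⟨j, le_rfl, by grind⟩
  · rcases eq_or_ne k s with rfl | hks
    · exact ⟨i, (hcars k j hk).le, by grind⟩
    · exact ⟨j, le_rfl, by grind⟩

theorem exists_ge_apply_mvpStep_eq_some (h : mvpStep occ i s = some occ')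
    (hk : occ k = some j) : ∃ k' ≥ k, occ' k' = some j := by
  obtain ⟨hs, rfl⟩ | ⟨j', q, hs, hsq, hq, rfl⟩ := mvpStep_eq_some h
  · exact ⟨k, le_rfl, by grind⟩
  · by_cases hks : k = s
    · exact ⟨q, by grind, by grind⟩
    · exact ⟨k, le_rfl, by grind⟩

/-- The occupancy after the first `t` cars have entered, or `none` if one of them failed to
park. -/
def stateAfter (p : Fin n → Fin n) (t : ℕ) : Option (Fin n → Option (Fin n)) :=
  ((List.finRange n).take t).foldlM (fun occ i => mvpStep occ i (p i)) fun _ => none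

theorem stateAfter_zero (p : Fin n → Fin n) : stateAfter p 0 = some fun _ => none := rfl

theorem stateAfter_succ (p : Fin n → Fin n) (c : Fin n) :
    stateAfter p (c + 1) = (stateAfter p c).bind fun occ => mvpStep occ c (p c) := by
  simp [stateAfter, List.take_add_one, List.foldlM_append]

theorem stateAfter_eq_mvpRun (p : Fin n → Fin n) : stateAfter p n = mvpRun p := by
  rw [stateAfter, List.take_of_length_le (by simp), mvpRun, runProcess]

theorem stateAfter_induction {motive : ℕ → (Fin n → Option (Fin n)) → Prop}
    (zero : motive 0 fun _ => none)
    (succ : ∀ (i : Fin n) occ occ', stateAfter p i = some occ → motive i occ →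
      mvpStep occ i (p i) = some occ' → motive (i + 1) occ')
    (ht : t ≤ n) (h : stateAfter p t = some occ) : motive t occ := by
  induction t generalizing occ with
  | zero => cases h; exact zero
  | succ t ih =>
    have hsucc := stateAfter_succ p ⟨t, ht⟩
    rw [hsucc, Option.bind_eq_some_iff] at h
    obtain ⟨occ₀, h₀, hstep⟩ := h
    exact succ ⟨t, ht⟩ occ₀ occ h₀ (ih (by omega) h₀) hstep

theorem lt_of_stateAfter_apply_eq_some (ht : t ≤ n) (h : stateAfter p t = some occ)
    (hk : occ k = some j) : (j : ℕ) < t := by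
  suffices ∀ k j, occ k = some j → (j : ℕ) < t from this k j hk
  refine stateAfter_induction (motive := fun t occ => ∀ k j, occ k = some j → (j : ℕ) < t)
    (by simp) (fun i occ occ' _ hcars hstep k j hk => ?_) ht h
  exact Nat.lt_succ_of_le (le_of_mvpStep_apply_eq_some hcars hstep hk)

theorem exists_ge_stateAfter_apply_pref (ht : t ≤ n) (h : stateAfter p t = some occ)
    (hc : (c : ℕ) < t) : ∃ j ≥ c, occ (p c) = some j := by
  refine stateAfter_induction
    (motive := fun t occ => (c : ℕ) < t → ∃ j ≥ c, occ (p c) = some j)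
    (by simp) (fun i occ occ' hocc ih hstep hci => ?_) ht h hc
  obtain hlt | heq := (Nat.lt_succ_iff.1 hci).lt_or_eq
  · obtain ⟨j, hcj, hj⟩ := ih hlt
    have hcars : ∀ k j, occ k = some j → j < i :=
      fun k j hk => lt_of_stateAfter_apply_eq_some i.2.le hocc hk
    obtain ⟨j', hjj', hj'⟩ := exists_ge_mvpStep_apply_eq_some hcars hstep hj
    exact ⟨j', hcj.trans hjj', hj'⟩
  · obtain rfl : c = i := Fin.ext heq
    exact ⟨c, le_rfl, mvpStep_apply_pref hstep⟩

theorem exists_ge_pref_stateAfter_apply (ht : t ≤ n) (h : stateAfter p t = some occ)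
    (hc : (c : ℕ) < t) : ∃ k ≥ p c, occ k = some c := by
  refine stateAfter_induction
    (motive := fun t occ => (c : ℕ) < t → ∃ k ≥ p c, occ k = some c)
    (by simp) (fun i occ occ' _ ih hstep hci => ?_) ht h hc
  obtain hlt | heq := (Nat.lt_succ_iff.1 hci).lt_or_eq
  · obtain ⟨k, hck, hk⟩ := ih hlt
    obtain ⟨k', hkk', hk'⟩ := exists_ge_apply_mvpStep_eq_some hstep hk
    exact ⟨k', hck.trans hkk', hk'⟩
  · obtain rfl : c = i := Fin.ext heq
    exact ⟨p c, le_rfl, mvpStep_apply_pref hstep⟩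

end Occupancy

section Outcome

variable {p : Fin n → Fin n} {π : Equiv.Perm (Fin n)}

theorem mvpOutcome_iff : MVPOutcome p π ↔ stateAfter p n = some fun i => some (π i) := by
  simp only [MVPOutcome, stateAfter_eq_mvpRun, ← funext_iff]
  grind

theorem MVPOutcome.le_apply_pref (h : MVPOutcome p π) (c : Fin n) : c ≤ π (p c) := by
  obtain ⟨j, hcj, hj⟩ := exists_ge_stateAfter_apply_pref le_rfl (mvpOutcome_iff.1 h) c.2
  exact hcj.trans_eq (Option.some.inj hj).symm

theorem MVPOutcome.pref_le_symm_apply (h : MVPOutcome p π) (c : Fin n) : p c ≤ π.symm c := by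
  obtain ⟨k, hck, hk⟩ := exists_ge_pref_stateAfter_apply le_rfl (mvpOutcome_iff.1 h) c.2
  exact hck.trans_eq (π.eq_symm_apply.2 (Option.some.inj hk))

theorem MVPOutcome.isParkingFunction (h : MVPOutcome p π) : IsParkingFunction p := fun k => by
  calc (k : ℕ) + 1 = ((Iic k).image π).card := by
        rw [card_image_of_injective _ π.injective, Fin.card_Iic]
    _ ≤ (univ.filter fun i => p i ≤ k).card := card_le_card fun c hc => by
        obtain ⟨i, hik, rfl⟩ := mem_image.1 hc
        have hpi : p (π i) ≤ i := by simpa using h.pref_le_symm_apply (π i)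
        simpa using hpi.trans (mem_Iic.1 hik)

theorem mem_fibMVP_iff : p ∈ FibMVP π ↔ MVPOutcome p π :=
  ⟨And.right, fun h => ⟨h.isParkingFunction, h⟩⟩

end Outcome

section CompleteBipartite

/-- `π` is the complete bipartite permutation `τ_{m,n}`. As spots and cars are `0`-indexed, spot
`i < m` holds car `i + n` and spot `m + j` holds car `j`. -/
def IsCompleteBipartite (m n : ℕ) (π : Equiv.Perm (Fin (m + n))) : Prop :=
  ∀ i : Fin (m + n), (π i : ℕ) = if (i : ℕ) < m then (i : ℕ) + n else (i : ℕ) - m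

variable {m : ℕ} {π : Equiv.Perm (Fin (m + n))} {p : Fin (m + n) → Fin (m + n)} {c : Fin (m + n)}

theorem IsCompleteBipartite.val_symm_apply (hπ : IsCompleteBipartite m n π) (c : Fin (m + n)) :
    (π.symm c : ℕ) = if (c : ℕ) < n then m + c else c - n := by
  have := hπ (π.symm c)
  rw [Equiv.apply_symm_apply] at this
  split_ifs at this ⊢ <;> omega

theorem IsCompleteBipartite.pref_le_of_mvpOutcome (hπ : IsCompleteBipartite m n π)
    (h : MVPOutcome p π) (hc : (c : ℕ) < n) : (p c : ℕ) ≤ m + c := by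
  simpa [hπ.val_symm_apply, hc, Fin.le_def] using h.pref_le_symm_apply c

theorem IsCompleteBipartite.pref_eq_of_mvpOutcome (hπ : IsCompleteBipartite m n π)
    (h : MVPOutcome p π) (hc : n ≤ c) : (p c : ℕ) = c - n := by
  have hle : (p c : ℕ) ≤ c - n := by
    simpa [hπ.val_symm_apply, hc.not_gt, Fin.le_def] using h.pref_le_symm_apply c
  have hge : (c : ℕ) ≤ π (p c) := h.le_apply_pref c
  rw [hπ, if_pos (by omega)] at hge
  omega

end CompleteBipartite

section Sweep

/-- The occupancy of the street `0, …, m + 1` in which cars `2, …, t + 1` hold spots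
`0, …, t - 1`, cars `u` and `v` hold spots `x` and `y`, and all other spots are free. -/
def sweepConfig (m t : ℕ) (u : Fin (m + 2)) (x : ℕ) (v : Fin (m + 2)) (y : ℕ) :
    Fin (m + 2) → Option (Fin (m + 2)) := fun k =>
  if h : (k : ℕ) < t ∧ (k : ℕ) < m then some ⟨k + 2, by omega⟩
  else if (k : ℕ) = x then some u
  else if (k : ℕ) = y then some v
  else none

/-- The first spot after `t` different from `y`, where a car bumped from `t` comes to rest. -/
def hop (t y : ℕ) : ℕ := if y = t + 1 then t + 2 else t + 1

/-- Whether, when cars `0` and `1` start the sweep at spots `x` and `y`, car `0` ends it to the left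
of car `1`. The car behind is first pushed up to the car ahead, at spot `max x y`; from then on
every bump is a leapfrog of one over the other, `m + 1 - max x y` of them in all (with `+` instead
of `-` here to avoid truncation). -/
def EndsInOrder (m x y : ℕ) : Prop := x < y ↔ Even (m + 1 + max x y)

variable {m t x y : ℕ} {u v : Fin (m + 2)}

instance : Decidable (EndsInOrder m x y) := inferInstanceAs (Decidable (_ ↔ _))

theorem sweepConfig_comm (h : x ≠ y) : sweepConfig m t u x v y = sweepConfig m t v y u x := by
  funext k
  grind [sweepConfig]

theorem mvpStep_sweepConfig_of_ne (ht : t < m) (hx : x ≠ t) (hy : y ≠ t) :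
    mvpStep (sweepConfig m t u x v y) ⟨t + 2, by omega⟩ ⟨t, by omega⟩ =
      some (sweepConfig m (t + 1) u x v y) := by
  rw [mvpStep_of_vacant (by grind [sweepConfig])]
  congr 1
  funext k
  grind [sweepConfig, Function.update_apply]

theorem mvpStep_sweepConfig_of_eq (ht : t < m) (hy : t < y) :
    mvpStep (sweepConfig m t u t v y) ⟨t + 2, by omega⟩ ⟨t, by omega⟩ =
      some (sweepConfig m (t + 1) u (hop t y) v y) := by
  rw [mvpStep_of_occupied (j := u) (k := ⟨hop t y, by grind [hop]⟩)
    (by grind [sweepConfig]) (by grind [hop]) (by grind [sweepConfig, hop])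
    (by grind [sweepConfig, hop])]
  congr 1
  funext k
  grind [sweepConfig, Function.update_apply, hop]

theorem endsInOrder_hop_left (hy : t < y) :
    EndsInOrder m (hop t y) y ↔ EndsInOrder m t y := by
  grind [EndsInOrder, hop]

theorem endsInOrder_hop_right (hx : t < x) :
    EndsInOrder m x (hop t x) ↔ EndsInOrder m x t := by
  grind [EndsInOrder, hop]

theorem exists_mvpStep_sweepConfig (ht : t < m) (hx : x ∈ Icc t (m + 1)) (hy : y ∈ Icc t (m + 1))
    (hxy : x ≠ y) :
    ∃ x' ∈ Icc (t + 1) (m + 1), ∃ y' ∈ Icc (t + 1) (m + 1), x' ≠ y' ∧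
      (EndsInOrder m x' y' ↔ EndsInOrder m x y) ∧
      mvpStep (sweepConfig m t u x v y) ⟨t + 2, by omega⟩ ⟨t, by omega⟩ =
        some (sweepConfig m (t + 1) u x' v y') := by
  simp only [mem_Icc] at hx hy ⊢
  rcases eq_or_ne x t with rfl | hxt
  · have hlt : x < y := by omega
    exact ⟨hop x y, by grind [hop], y, by omega, by grind [hop], endsInOrder_hop_left hlt,
      mvpStep_sweepConfig_of_eq ht hlt⟩
  rcases eq_or_ne y t with rfl | hyt
  · have hlt : y < x := by omega
    have hne : x ≠ hop y x := by grind [hop]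
    refine ⟨x, by omega, hop y x, by grind [hop], hne, endsInOrder_hop_right hlt, ?_⟩
    rw [sweepConfig_comm hxy, sweepConfig_comm hne, mvpStep_sweepConfig_of_eq ht hlt]
  · exact ⟨x, by omega, y, by omega, hxy, Iff.rfl, mvpStep_sweepConfig_of_ne ht hxt hyt⟩

/-- The spot of car `0`, which prefers `a`, once car `1`, which prefers `b`, has entered. -/
def startSpot (a b : ℕ) : ℕ := if a = b then a + 1 else a

variable {p : Fin (m + 2) → Fin (m + 2)} {π : Equiv.Perm (Fin (m + 2))}

theorem stateAfter_two (h0 : (p 0 : ℕ) ≤ m) :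
    stateAfter p 2 = some (sweepConfig m 0 0 (startSpot (p 0) (p 1)) 1 (p 1)) := by
  have hone : stateAfter p 1 = some (Function.update (fun _ => none) (p 0) (some 0)) := by
    simpa [mvpStep_of_vacant, stateAfter_zero] using stateAfter_succ p 0
  have htwo : stateAfter p 2 = (stateAfter p 1).bind fun occ => mvpStep occ 1 (p 1) :=
    stateAfter_succ p 1
  rw [htwo, hone, Option.bind_some]
  by_cases heq : p 0 = p 1
  · rw [mvpStep_of_occupied (j := 0) (k := ⟨p 0 + 1, by omega⟩) (by simp [heq])
      (by grind) (by grind) (by grind)]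
    congr 1
    funext k
    grind [sweepConfig, startSpot, Function.update_apply]
  · rw [mvpStep_of_vacant (by grind)]
    congr 1
    funext k
    grind [sweepConfig, startSpot, Function.update_apply]

theorem exists_stateAfter_eq_sweepConfig (h0 : (p 0 : ℕ) ≤ m)
    (hp : ∀ c : Fin (m + 2), 2 ≤ (c : ℕ) → (p c : ℕ) = c - 2) (ht : t ≤ m) :
    ∃ x ∈ Icc t (m + 1), ∃ y ∈ Icc t (m + 1), x ≠ y ∧
      (EndsInOrder m x y ↔ EndsInOrder m (startSpot (p 0) (p 1)) (p 1)) ∧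
      stateAfter p (t + 2) = some (sweepConfig m t 0 x 1 y) := by
  induction t with
  | zero =>
    exact ⟨_, by grind [startSpot], _, by grind, by grind [startSpot], Iff.rfl, stateAfter_two h0⟩
  | succ t ih =>
    obtain ⟨x, hx, y, hy, hxy, hord, hstate⟩ := ih (by omega)
    obtain ⟨x', hx', y', hy', hxy', hord', hstep⟩ :=
      exists_mvpStep_sweepConfig (u := 0) (v := 1) ht hx hy hxy
    have hpref : p ⟨t + 2, by omega⟩ = ⟨t, by omega⟩ := Fin.ext (by simp [hp])
    refine ⟨x', hx', y', hy', hxy', hord'.trans hord, ?_⟩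
    rw [← hstep, ← hpref]
    exact (stateAfter_succ p ⟨t + 2, by omega⟩).trans (by rw [hstate, Option.bind_some])

theorem sweepConfig_eq_iff (hπ : IsCompleteBipartite m 2 π) (hx : x ∈ Icc m (m + 1))
    (hy : y ∈ Icc m (m + 1)) (hxy : x ≠ y) :
    (sweepConfig m m 0 x 1 y = fun i => some (π i)) ↔ EndsInOrder m x y := by
  simp only [mem_Icc] at hx hy
  have hord : EndsInOrder m x y ↔ x = m := by grind [EndsInOrder]
  rw [hord]
  constructor
  · intro h
    have hm : π ⟨m, by omega⟩ = 0 := Fin.ext (by simp [hπ _])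
    have hspot := congrFun h ⟨m, by omega⟩
    have hne : (1 : Fin (m + 2)) ≠ 0 := by simp
    grind [sweepConfig]
  · rintro rfl
    funext i
    have hi := hπ i
    have hone : ((1 : Fin (x + 2)) : ℕ) = 1 := rfl
    grind [sweepConfig]

theorem IsCompleteBipartite.mvpOutcome_iff_endsInOrder (hπ : IsCompleteBipartite m 2 π)
    (h0 : (p 0 : ℕ) ≤ m) (hp : ∀ c : Fin (m + 2), 2 ≤ (c : ℕ) → (p c : ℕ) = c - 2) :
    MVPOutcome p π ↔ EndsInOrder m (startSpot (p 0) (p 1)) (p 1) := by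
  obtain ⟨x, hx, y, hy, hxy, hord, hstate⟩ := exists_stateAfter_eq_sweepConfig h0 hp le_rfl
  rw [mvpOutcome_iff, hstate, Option.some_inj, sweepConfig_eq_iff hπ hx hy hxy, hord]

end Sweep

section Counting

variable {m : ℕ} {π : Equiv.Perm (Fin (m + 2))}

/-- The preferences of cars `0` and `1` that occur in the fibre of `τ_{m,2}`. -/
def sortingPairs (m : ℕ) : Finset (ℕ × ℕ) :=
  {q ∈ range (m + 1) ×ˢ range (m + 2) | EndsInOrder m (startSpot q.1 q.2) q.2}

theorem injOn_fibMVP (hπ : IsCompleteBipartite m 2 π) :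
    Set.InjOn (fun p : Fin (m + 2) → Fin (m + 2) => ((p 0 : ℕ), (p 1 : ℕ))) (FibMVP π) := by
  intro p hp q hq hpq
  rw [Prod.mk.injEq] at hpq
  funext c
  ext
  by_cases hc : 2 ≤ (c : ℕ)
  · rw [hπ.pref_eq_of_mvpOutcome hp.2 hc, hπ.pref_eq_of_mvpOutcome hq.2 hc]
  · obtain rfl | rfl : c = 0 ∨ c = 1 := by
      simp only [Fin.ext_iff, Fin.val_zero, Fin.val_one]
      omega
    exacts [hpq.1, hpq.2]

theorem surjOn_fibMVP (hπ : IsCompleteBipartite m 2 π) :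
    Set.SurjOn (fun p : Fin (m + 2) → Fin (m + 2) => ((p 0 : ℕ), (p 1 : ℕ))) (FibMVP π)
      (sortingPairs m) := by
  rintro ⟨a, b⟩ hab
  simp only [sortingPairs, mem_coe, mem_filter, mem_product, mem_range] at hab
  obtain ⟨⟨ha, hb⟩, hord⟩ := hab
  let p : Fin (m + 2) → Fin (m + 2) :=
    Fin.cons ⟨a, by omega⟩ (Fin.cons ⟨b, hb⟩ fun i : Fin m => i.castSucc.castSucc)
  have hp : ∀ c : Fin (m + 2), 2 ≤ (c : ℕ) → (p c : ℕ) = c - 2 := by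
    rintro ⟨_ | _ | c, hc⟩ h
    · simp at h
    · simp at h
    · rfl
  have hout : MVPOutcome p π :=
    (hπ.mvpOutcome_iff_endsInOrder (Nat.lt_succ_iff.1 ha) hp).2 hord
  exact ⟨p, mem_fibMVP_iff.2 hout, rfl⟩

theorem bijOn_fibMVP_sortingPairs (hπ : IsCompleteBipartite m 2 π) :
    Set.BijOn (fun p : Fin (m + 2) → Fin (m + 2) => ((p 0 : ℕ), (p 1 : ℕ))) (FibMVP π)
      (sortingPairs m) := by
  refine ⟨fun p hp => ?_, injOn_fibMVP hπ, surjOn_fibMVP hπ⟩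
  have h0 : (p 0 : ℕ) ≤ m := hπ.pref_le_of_mvpOutcome hp.2 Nat.two_pos
  have hord := (hπ.mvpOutcome_iff_endsInOrder h0 fun c => hπ.pref_eq_of_mvpOutcome hp.2).1 hp.2
  simpa [sortingPairs, Nat.lt_succ_iff, h0, (p 1).is_le] using hord

-- The parity of `m + 1 + max x y` is unchanged, so only pairs reaching one of the two new spots
-- matter; `(m + 1, m + 1)` does, as car `0` is bumped to `m + 2`.
theorem sortingPairs_add_two (m : ℕ) :
    sortingPairs (m + 2) = sortingPairs m ∪
      (range (m + 3) ×ˢ {m + 3} ∪ ({m + 2} ×ˢ range (m + 2) ∪ {(m + 1, m + 1)})) := by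
  ext ⟨a, b⟩
  simp only [sortingPairs, mem_filter, mem_product, mem_range, mem_union, mem_singleton,
    Prod.mk.injEq]
  grind [EndsInOrder, startSpot]

theorem card_sortingPairs (m : ℕ) : (sortingPairs m).card = m + 1 + (m + 1) ^ 2 / 2 := by
  induction m using Nat.twoStepInduction with
  | zero => decide
  | one => decide
  | more m ih _ =>
    rw [sortingPairs_add_two, card_union_of_disjoint, card_union_of_disjoint,
      card_union_of_disjoint, ih]
    · simp only [card_product, card_range, card_singleton]
      have hsq : (m + 2 + 1) ^ 2 = (m + 1) ^ 2 + 2 * (2 * m + 4) := by ring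
      omega
    all_goals
      rw [disjoint_left]
      grind [sortingPairs]

end Counting

/-- `|Fib_{m+2}(τ_{m,2})| = m + 1 + ⌊(m+1)²/2⌋`, where `τ_{m,2}`
is the complete bipartite permutation `34⋯(m+2)12` (given here 0-indexed:
`π i = i + 2` for `i < m` and `π i = i - m` for `i ≥ m`). -/
theorem statement12 (m : ℕ) (π : Equiv.Perm (Fin (m + 2)))
    (hπ : ∀ i : Fin (m + 2),
      (π i : ℕ) = if (i : ℕ) < m then (i : ℕ) + 2 else (i : ℕ) - m) :
    (FibMVP π).ncard = m + 1 + (m + 1) ^ 2 / 2 := by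
  rw [(bijOn_fibMVP_sortingPairs hπ).ncard_eq, Set.ncard_coe_finset, card_sortingPairs]

end MVPPaper
end

section
/- Fix m ≥ 1 and consider the complete bipartite permutation τ_{m,2} ∈ S_{m+2}. The 1-subgraph S of its inversion graph consisting of exactly the two edges (1, m+1) and (1, m+2) is valid if and only if m is odd. -/
/- Common definitions: the classical and MVP parking processes, parking
functions, inversion graphs and 1-subgraphs, Motzkin paths, and sandpile
configurations on complete graphs. Spots, cars and vertices are 0-indexed
(element `i : Fin n` corresponds to the 1-indexed `i+1` of the paper). -/

namespace MVPPaper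

open Finset

variable {n : ℕ}

/-!
If every car prefers a spot at most its own label, then after cars `0, …, k - 1` have parked,
exactly the spots `0, …, k - 1` are occupied. Car `k` takes its preferred spot `s` and sends the
previous occupant to spot `k`, so the arrangement is multiplied on the right by the transposition
`(s k)`, and the outcome is the product of these transpositions.

For the star of all edges `(1, m + j)` of `τ_{m,n}`, car `c` prefers spot `c - n` (truncated).
Multiplying out the transpositions leaves the cars `0, …, n - 1` on the last `n` spots, with spot
`i` occupied by the residue of `i - 1` modulo `n`. They are in increasing order exactly when spot
`m` is occupied by car `0`, that is, when `n ∣ m - 1`.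
-/

section Parking

theorem firstFree_eq_some {occ : Fin n → Option (Fin n)} {s k : Fin n} (hsk : s ≤ k)
    (hk : occ k = none) (hocc : ∀ j < k, (occ j).isSome) : firstFree occ s = some k := by
  rw [firstFree, List.find?_eq_some_iff_getElem]
  refine ⟨by simp [hsk, hk], k, by simp, by simp, fun j hj => ?_⟩
  have hsome := hocc ⟨j, hj.trans k.isLt⟩ hj
  simp [Option.isNone_eq_false_iff.2 hsome]

/-- The occupancy in which exactly the spots `0, …, k - 1` are occupied, spot `i` by car `σ i`. -/
def prefixOcc (σ : Equiv.Perm (Fin n)) (k : ℕ) : Fin n → Option (Fin n) := fun i =>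
  if (i : ℕ) < k then some (σ i) else none

theorem mvpStep_prefixOcc {σ : Equiv.Perm (Fin n)} {c s : Fin n} (hs : s ≤ c) (hc : σ c = c) :
    mvpStep (prefixOcc σ c) c s = some (prefixOcc (σ * Equiv.swap s c) (c + 1)) := by
  rcases hs.eq_or_lt with rfl | hs
  · have hfree : prefixOcc σ s s = none := if_neg (lt_irrefl _)
    simp only [mvpStep, hfree, Option.some.injEq]
    ext1 i
    rcases eq_or_ne i s with rfl | hi
    · simp [prefixOcc, hc]
    · simp [prefixOcc, hi, Order.lt_add_one_iff, hi.le_iff_lt]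
  · have hoccupied : prefixOcc σ c s = some (σ s) := if_pos hs
    have hfree : firstFree (Function.update (prefixOcc σ c) s (some c)) s = some c := by
      refine firstFree_eq_some hs.le ?_ fun j hj => ?_
      · simp [prefixOcc, hs.ne']
      · rcases eq_or_ne j s with rfl | hjs
        · simp
        · simp [prefixOcc, hjs, hj]
    simp only [mvpStep, hoccupied, hfree, Option.map_some, Option.some.injEq]
    ext1 i
    rcases eq_or_ne i c with rfl | hic
    · simp [prefixOcc]
    rcases eq_or_ne i s with rfl | his
    · simp [prefixOcc, hic, hc, hs.le, Order.lt_add_one_iff]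
    · simp [prefixOcc, hic, his, Equiv.swap_apply_of_ne_of_ne, Order.lt_add_one_iff,
        hic.le_iff_lt]

/-- The product of the transpositions of the spots `p c` and `c` over the first `k` cars `c`, in
increasing order of `c`. When `p c ≤ c` for all `c`, it is the arrangement of those cars under the
MVP process. -/
def prefSwapProd (p : Fin n → Fin n) (k : ℕ) : Equiv.Perm (Fin n) :=
  (((List.finRange n).take k).map fun c => Equiv.swap (p c) c).prod

theorem prefSwapProd_zero (p : Fin n → Fin n) : prefSwapProd p 0 = 1 := by
  simp [prefSwapProd]

theorem prefSwapProd_succ (p : Fin n → Fin n) (c : Fin n) :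
    prefSwapProd p (c + 1) = prefSwapProd p c * Equiv.swap (p c) c := by
  simp [prefSwapProd, List.take_succ_eq_append_getElem]

theorem prefSwapProd_apply_of_le {p : Fin n → Fin n} (hp : ∀ c, p c ≤ c) {k : ℕ} {i : Fin n}
    (hki : k ≤ i) : prefSwapProd p k i = i := by
  induction k with
  | zero => simp [prefSwapProd_zero]
  | succ k ih =>
    have hlt : (⟨k, by omega⟩ : Fin n) < i := hki
    rw [prefSwapProd_succ p ⟨k, by omega⟩, Equiv.Perm.mul_apply,
      Equiv.swap_apply_of_ne_of_ne ((hp _).trans_lt hlt).ne' hlt.ne', ih (by omega)]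

theorem mvpRun_eq_of_le {p : Fin n → Fin n} (hp : ∀ c, p c ≤ c) :
    mvpRun p = some (prefixOcc (prefSwapProd p n) n) := by
  have hprefix : ∀ k ≤ n, ((List.finRange n).take k).foldlM
      (fun occ i => mvpStep occ i (p i)) (fun _ => none) =
        some (prefixOcc (prefSwapProd p k) k) := by
    intro k hk
    induction k with
    | zero =>
      have hempty : prefixOcc (prefSwapProd p 0) 0 = fun _ => none := by ext1 i; simp [prefixOcc]
      simp [hempty]
    | succ k ih =>
      have hstep := mvpStep_prefixOcc (hp ⟨k, hk⟩) (prefSwapProd_apply_of_le hp le_rfl)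
      rw [← prefSwapProd_succ] at hstep
      rw [List.take_succ_eq_append_getElem (by simpa using hk), List.foldlM_append,
        ih (by omega)]
      simpa using hstep
  simpa [mvpRun, runProcess, List.take_of_length_le] using hprefix n le_rfl

theorem mvpOutcome_iff_prefSwapProd_eq {p : Fin n → Fin n} (hp : ∀ c, p c ≤ c)
    (π : Equiv.Perm (Fin n)) : MVPOutcome p π ↔ prefSwapProd p n = π := by
  simp [MVPOutcome, mvpRun_eq_of_le hp, prefixOcc, Equiv.ext_iff]

theorem coe_prefSwapProd_apply_of_sub {p : Fin n → Fin n} {d : ℕ}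
    (hp : ∀ c, (p c : ℕ) = c - d) {k : ℕ} (hk : k ≤ n) {i : Fin n} (hi : (i : ℕ) < k) :
    (prefSwapProd p k i : ℕ) =
      if (i : ℕ) + d < k then i + d else if (i : ℕ) = 0 then k - 1 else (i - 1) % d := by
  have hle : ∀ c, p c ≤ c := fun c => Fin.le_def.2 (by rw [hp]; exact Nat.sub_le _ _)
  induction k generalizing i with
  | zero => omega
  | succ k ih =>
    obtain ⟨c, rfl⟩ : ∃ c : Fin n, (c : ℕ) = k := ⟨⟨k, hk⟩, rfl⟩
    have hpc := hp c
    rw [prefSwapProd_succ, Equiv.Perm.mul_apply]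
    rcases eq_or_ne i (p c) with rfl | hip
    · rw [Equiv.swap_apply_left, prefSwapProd_apply_of_le hle le_rfl]
      split_ifs <;> omega
    rcases eq_or_ne i c with rfl | hic
    · have hlt : (p i : ℕ) < i := lt_of_le_of_ne (hle i) fun h => hip (Fin.ext h.symm)
      have hmod_of_le (hid : (i : ℕ) ≤ d) : ((i : ℕ) - 1) % d = i - 1 :=
        Nat.mod_eq_of_lt (by omega)
      have hmod_of_lt (hdi : d < i) : ((p i : ℕ) - 1) % d = (i - 1) % d := by
        rw [hpc, Nat.sub_right_comm, ← Nat.mod_eq_sub_mod (by omega)]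
      rw [Equiv.swap_apply_right, ih (by omega) hlt]
      split_ifs <;> omega
    · have hne : (i : ℕ) ≠ c := Fin.val_ne_of_ne hic
      have hne' : (i : ℕ) ≠ p c := Fin.val_ne_of_ne hip
      rw [Equiv.swap_apply_of_ne_of_ne hip hic, ih (by omega) (by omega)]
      split_ifs <;> omega

end Parking

section SubToPF

variable {π : Equiv.Perm (Fin n)} {S : Finset (Fin n × Fin n)} {i j : Fin n}

theorem subToPF_apply_of_mem (hij : (j, i) ∈ S) (huniq : ∀ j', (j', i) ∈ S → j' = j) :
    subToPF π S (π i) = j := by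
  have hex : ∃ j', (j', π.symm (π i)) ∈ S := ⟨j, by simpa using hij⟩
  rw [subToPF, dif_pos hex]
  exact huniq _ (by simpa using hex.choose_spec)

theorem subToPF_apply_of_forall_notMem (hi : ∀ j, (j, i) ∉ S) : subToPF π S (π i) = i := by
  simp [subToPF, hi]

end SubToPF

section CompleteBipartite

variable {m : ℕ}

/-- The complete bipartite permutation `τ_{m,n}`: the cars `n, …, m + n - 1` followed by the cars
`0, …, n - 1`. -/
def completeBipartitePerm (m n : ℕ) : Equiv.Perm (Fin (m + n)) :=
  finAddFlip.trans (finCongr (Nat.add_comm n m))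

theorem coe_completeBipartitePerm (i : Fin (m + n)) :
    (completeBipartitePerm m n i : ℕ) = if (i : ℕ) < m then (i : ℕ) + n else (i : ℕ) - m := by
  split_ifs with hi
  · simp [completeBipartitePerm, finAddFlip_apply_mk_left hi, Nat.add_comm]
  · simp [completeBipartitePerm, finAddFlip_apply_mk_right (not_lt.1 hi) i.isLt]

/-- The star of all the edges `(1, m + 1), …, (1, m + n)` of the inversion graph of `τ_{m,n}`. In
the 0-indexed encoding these are the pairs `(0, i)` with `m ≤ i`. -/
def firstSpotStar (m n : ℕ) : Finset (Fin (m + n) × Fin (m + n)) :=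
  univ.filter fun e => (e.1 : ℕ) = 0 ∧ m ≤ e.2

theorem mem_firstSpotStar {e : Fin (m + n) × Fin (m + n)} :
    e ∈ firstSpotStar m n ↔ (e.1 : ℕ) = 0 ∧ m ≤ e.2 := by
  simp [firstSpotStar]

theorem pair_eq_firstSpotStar_two {j i i' : Fin (m + 2)} (hj : (j : ℕ) = 0) (hi : (i : ℕ) = m)
    (hi' : (i' : ℕ) = m + 1) : {(j, i), (j, i')} = firstSpotStar m 2 := by
  ext ⟨a, b⟩
  simp only [mem_firstSpotStar, mem_insert, mem_singleton, Prod.mk.injEq, Fin.ext_iff]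
  omega

theorem coe_subToPF_firstSpotStar (c : Fin (m + n)) :
    (subToPF (completeBipartitePerm m n) (firstSpotStar m n) c : ℕ) = c - n := by
  obtain ⟨i, rfl⟩ := (completeBipartitePerm m n).surjective c
  rw [coe_completeBipartitePerm]
  split_ifs with hi
  · rw [subToPF_apply_of_forall_notMem fun j hj => (mem_firstSpotStar.1 hj).2.not_gt hi]
    omega
  · have hmem : ((⟨0, i.pos⟩ : Fin (m + n)), i) ∈ firstSpotStar m n :=
      mem_firstSpotStar.2 ⟨rfl, not_lt.1 hi⟩
    rw [subToPF_apply_of_mem hmem fun j hj => Fin.ext (mem_firstSpotStar.1 hj).1, Fin.val_mk]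
    omega

theorem isValid_firstSpotStar_iff_forall (hm : 0 < m) :
    IsValid (completeBipartitePerm m n) (firstSpotStar m n) ↔
      ∀ j < n, (m + j - 1) % n = j := by
  have hle : ∀ c, subToPF (completeBipartitePerm m n) (firstSpotStar m n) c ≤ c := fun c =>
    Fin.le_def.2 ((coe_subToPF_firstSpotStar c).trans_le (Nat.sub_le _ _))
  simp only [IsValid, mvpOutcome_iff_prefSwapProd_eq hle, Equiv.ext_iff, Fin.ext_iff,
    coe_prefSwapProd_apply_of_sub coe_subToPF_firstSpotStar le_rfl (Fin.isLt _),
    coe_completeBipartitePerm, Nat.add_lt_add_iff_right]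
  constructor
  · intro h j hj
    simpa [hm.ne'] using h ⟨m + j, by omega⟩
  · intro h i
    split_ifs with him hi
    · rfl
    · omega
    · simpa [Nat.add_sub_cancel' (not_lt.1 him)] using h (i - m) (by omega)

theorem statement16_general (m n : ℕ) (hm : 0 < m) (hn : 0 < n) :
    IsValid (completeBipartitePerm m n) (firstSpotStar m n) ↔ m ≡ 1 [MOD n] := by
  rw [isValid_firstSpotStar_iff_forall hm, Nat.ModEq.comm, Nat.modEq_iff_dvd' hm]
  constructor
  · exact fun h => Nat.dvd_of_mod_eq_zero (h 0 hn)
  · rintro ⟨q, hq⟩ j hj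
    rw [show m + j - 1 = j + n * q by omega, Nat.add_mul_mod_self_left, Nat.mod_eq_of_lt hj]

end CompleteBipartite

/-- the 1-subgraph of the inversion graph of `τ_{m,2}` with the
two edges `(1, m+1)` and `(1, m+2)` (0-indexed: `(0, m)` and `(0, m+1)`) is
valid iff `m` is odd. -/
theorem statement16 (m : ℕ) (hm : 1 ≤ m) (π : Equiv.Perm (Fin (m + 2)))
    (hπ : ∀ i : Fin (m + 2),
      (π i : ℕ) = if (i : ℕ) < m then (i : ℕ) + 2 else (i : ℕ) - m) :
    (IsValid π
      ({((⟨0, by omega⟩ : Fin (m + 2)), (⟨m, by omega⟩ : Fin (m + 2))),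
        ((⟨0, by omega⟩ : Fin (m + 2)), (⟨m + 1, by omega⟩ : Fin (m + 2)))} :
        Finset (Fin (m + 2) × Fin (m + 2))) ↔ Odd m) := by
  obtain rfl : π = completeBipartitePerm m 2 :=
    Equiv.ext fun i => Fin.ext ((hπ i).trans (coe_completeBipartitePerm i).symm)
  rw [pair_eq_firstSpotStar_two rfl rfl rfl, statement16_general m 2 hm two_pos,
    Nat.odd_iff, Nat.ModEq]

end MVPPaper
end

section
/- Let c be a minimal recurrent sandpile configuration on the complete graph K_n, i.e., (c_1,…,c_n) is a permutation of {0,1,…,n−1}, and let p = (n − c_1,…, n − c_n) be the corresponding parking function. Then the MVP outcome of p equals the canonical toppling of c: O_MVP(p) = CanTop(c), where CanTop(c) is the permutation π ∈ S_n with π_i equal to the unique index j such that c_j = n − i. -/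
/- Common definitions: the classical and MVP parking processes, parking
functions, inversion graphs and 1-subgraphs, Motzkin paths, and sandpile
configurations on complete graphs. Spots, cars and vertices are 0-indexed
(element `i : Fin n` corresponds to the 1-indexed `i+1` of the paper). -/

namespace MVPPaper

open Finset

variable {n : ℕ}

/-!
The preference `p = n - c` is the inverse of `π`, hence injective. Every car therefore finds its
preferred spot free and is never bumped, so car `i` ends up in spot `p i`, i.e. spot `k` ends up
with car `π k`.
-/

section FoldUpdate

variable {α β γ : Type*} [DecidableEq β] {p : α → β} {v : α → γ} {l : List α}

theorem foldl_update_apply_of_notMem {f : β → γ} {b : β} (hb : b ∉ l.map p) :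
    l.foldl (fun g a => Function.update g (p a) (v a)) f b = f b := by
  induction l generalizing f with
  | nil => rfl
  | cons a l ih =>
    obtain ⟨hba, hbl⟩ : b ≠ p a ∧ b ∉ l.map p := by
      simpa only [List.map_cons, List.mem_cons, not_or] using hb
    rw [List.foldl_cons, ih hbl, Function.update_of_ne hba]

theorem foldl_update_apply_of_mem {f : β → γ} {a : α} (hl : (l.map p).Nodup) (ha : a ∈ l) :
    l.foldl (fun g a => Function.update g (p a) (v a)) f (p a) = v a := by
  induction l generalizing f with
  | nil => contradiction
  | cons a' l ih =>
    obtain ⟨ha', hl⟩ := List.nodup_cons.mp hl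
    rw [List.foldl_cons]
    rcases List.mem_cons.mp ha with rfl | ha
    · rw [foldl_update_apply_of_notMem ha', Function.update_self]
    · exact ih hl ha

end FoldUpdate

section ParkingProcess

variable {step : (Fin n → Option (Fin n)) → Fin n → Fin n → Option (Fin n → Option (Fin n))}
  {p : Fin n → Fin n}

theorem foldlM_step_eq_some_foldl_update
    (hstep : ∀ occ i s, occ s = none → step occ i s = some (Function.update occ s (some i)))
    {l : List (Fin n)} (hl : (l.map p).Nodup) {occ : Fin n → Option (Fin n)}
    (hfree : ∀ i ∈ l, occ (p i) = none) :
    l.foldlM (fun occ i => step occ i (p i)) occ =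
      some (l.foldl (fun occ i => Function.update occ (p i) (some i)) occ) := by
  induction l generalizing occ with
  | nil => rfl
  | cons a l ih =>
    obtain ⟨ha, hl⟩ := List.nodup_cons.mp hl
    have hfree' : ∀ i ∈ l, Function.update occ (p a) (some a) (p i) = none := fun i hi => by
      have hne : p i ≠ p a := fun h => ha (h ▸ List.mem_map_of_mem hi)
      rw [Function.update_of_ne hne, hfree i (List.mem_cons_of_mem a hi)]
    rw [List.foldlM_cons, hstep occ a (p a) (hfree a List.mem_cons_self)]
    exact ih hl hfree'

theorem exists_runProcess_eq_some_of_injective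
    (hstep : ∀ occ i s, occ s = none → step occ i s = some (Function.update occ s (some i)))
    (hp : Function.Injective p) :
    ∃ occ, runProcess step p = some occ ∧ ∀ i, occ (p i) = some i := by
  have hnodup : ((List.finRange n).map p).Nodup := (List.nodup_finRange n).map hp
  exact ⟨_, foldlM_step_eq_some_foldl_update hstep hnodup fun _ _ => rfl,
    fun i => foldl_update_apply_of_mem hnodup (List.mem_finRange i)⟩

end ParkingProcess

theorem mvpStep_of_eq_none {occ : Fin n → Option (Fin n)} {i s : Fin n} (h : occ s = none) :
    mvpStep occ i s = some (Function.update occ s (some i)) := by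
  simp only [mvpStep, h]

theorem mvpOutcome_symm (π : Equiv.Perm (Fin n)) : MVPOutcome π.symm π := by
  obtain ⟨occ, hrun, hocc⟩ :=
    exists_runProcess_eq_some_of_injective (fun _ _ _ => mvpStep_of_eq_none) π.symm.injective
  exact ⟨occ, hrun, fun k => by simpa only [Equiv.symm_apply_apply] using hocc (π k)⟩

/-- if `c` is a minimal recurrent configuration on `K_n` (its
entries are a permutation of `{0,…,n-1}`) and `p = n - c` is the corresponding
parking function, then `O_MVP(p)` is the canonical toppling of `c`, i.e. the
permutation `π` with `c (π i) = n - 1 - i` (0-indexed) for all `i`. -/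
theorem statement19 (n : ℕ) (c : Fin n → ℕ)
    (hperm : ∃ σ : Equiv.Perm (Fin n), ∀ i, c i = (σ i : ℕ))
    (π : Equiv.Perm (Fin n)) (hπ : ∀ i : Fin n, c (π i) = n - 1 - (i : ℕ)) :
    MVPOutcome (fun i : Fin n => (⟨n - 1 - c i, by have := i.isLt; omega⟩ : Fin n)) π := by
  have hp : (fun i : Fin n => (⟨n - 1 - c i, by have := i.isLt; omega⟩ : Fin n)) = π.symm := by
    funext i
    obtain ⟨k, rfl⟩ := π.surjective i
    rw [Equiv.symm_apply_apply]
    ext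
    calc n - 1 - c (π k) = n - 1 - (n - 1 - k) := by rw [hπ k]
      _ = k := Nat.sub_sub_self (Nat.le_sub_one_of_lt k.isLt)
  rw [hp]
  exact mvpOutcome_symm π

end MVPPaper
end
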